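/- arXiv:1908.03317 — 8 statements merged into one kernel-verified Lean document; each statement's English description precedes it below -/
import Mathlib

section
/- Let $N = n + d$ with $n \geq d$, and let $H$ be an $N \times N$ Hadamard matrix partitioned in block form $H = \begin{bmatrix} D & E \\ V & C \end{bmatrix}$, where $D$ is $n \times n$ and $C$ is $d \times d$. Then $(\det D)^2 = N^{\,n-d}\,(\det C)^2$; equivalently, $|\det D| = N^{(n-d)/2}\,|\det C|$ (with the real power $N^{(n-d)/2}$). -/
/-!
Multiplying `H = [[D, E], [V, C]]` by the second block column of `Hᵀ`, completed by the identity,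
gives `H * [[1, Vᵀ], [0, Cᵀ]] = [[D, 0], [V, N • 1]]`, because `H * Hᵀ = N • 1` says
`D Vᵀ + E Cᵀ = 0` and `V Vᵀ + C Cᵀ = N • 1`. Taking determinants,
`det H * det C = det D * N ^ d`. Squaring, using `(det H)² = N ^ (n + d)`, and cancelling
`N ^ (2 d)` yields the squared identity; the other one is its nonnegative square root.
-/

open Matrix

/-- For a Hadamard matrix `H = [[D, E], [V, C]]` of order `N = n + d` with `n ≥ d`,
`(det D)² = N^(n-d) (det C)²`, equivalently `|det D| = N^((n-d)/2) |det C|`. -/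
theorem stmt_5 (n d : ℕ) (hnd : d ≤ n)
    (D : Matrix (Fin n) (Fin n) ℝ) (E : Matrix (Fin n) (Fin d) ℝ)
    (V : Matrix (Fin d) (Fin n) ℝ) (C : Matrix (Fin d) (Fin d) ℝ)
    (H : Matrix (Fin n ⊕ Fin d) (Fin n ⊕ Fin d) ℝ)
    (hblocks : H = Matrix.fromBlocks D E V C)
    (hentries : ∀ i j, H i j = 1 ∨ H i j = -1)
    (hHHT : H * Hᵀ = ((n + d : ℕ) : ℝ) • (1 : Matrix (Fin n ⊕ Fin d) (Fin n ⊕ Fin d) ℝ))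
    (hHTH : Hᵀ * H = ((n + d : ℕ) : ℝ) • (1 : Matrix (Fin n ⊕ Fin d) (Fin n ⊕ Fin d) ℝ)) :
    D.det ^ 2 = ((n + d : ℕ) : ℝ) ^ (n - d) * C.det ^ 2 ∧
      |D.det| = ((n + d : ℕ) : ℝ) ^ ((((n : ℝ) - (d : ℝ)) / 2)) * |C.det| := by
  have hsq : D.det ^ 2 = ((n + d : ℕ) : ℝ) ^ (n - d) * C.det ^ 2 := by
    rcases Nat.eq_zero_or_pos (n + d) with h0 | hpos
    · -- `N = 0` cannot be cancelled, but then both blocks are empty with determinant `1`.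
      obtain ⟨rfl, rfl⟩ : n = 0 ∧ d = 0 := by omega
      simp
    · have hN : ((n + d : ℕ) : ℝ) ≠ 0 := by exact_mod_cast hpos.ne'
      have hdetH : H.det ^ 2 = ((n + d : ℕ) : ℝ) ^ (n + d) := by
        have h := congrArg Matrix.det hHHT
        rw [det_mul, det_transpose, det_smul, det_one, mul_one, Fintype.card_sum,
          Fintype.card_fin, Fintype.card_fin] at h
        rw [sq, h]
      generalize ((n + d : ℕ) : ℝ) = N at *
      subst hblocks
      rw [fromBlocks_transpose, fromBlocks_multiply, ← fromBlocks_one, fromBlocks_smul,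
        fromBlocks_inj] at hHHT
      obtain ⟨-, h12, -, h22⟩ := hHHT
      have hprod : fromBlocks D E V C * fromBlocks 1 Vᵀ 0 Cᵀ
          = fromBlocks D 0 V (N • (1 : Matrix (Fin d) (Fin d) ℝ)) := by
        rw [fromBlocks_multiply, h12, h22]
        simp
      have hdet := congrArg Matrix.det hprod
      rw [det_mul, det_fromBlocks_zero₂₁, det_fromBlocks_zero₁₂, det_one, one_mul,
        det_transpose, det_smul, det_one, mul_one, Fintype.card_fin] at hdet
      apply mul_right_cancel₀ (pow_ne_zero (2 * d) hN)
      calc D.det ^ 2 * N ^ (2 * d) = (D.det * N ^ d) ^ 2 := by ring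
        _ = N ^ (n + d) * C.det ^ 2 := by rw [← hdet, mul_pow, hdetH]
        _ = N ^ (n - d) * C.det ^ 2 * N ^ (2 * d) := by
          rw [show n + d = (n - d) + 2 * d by omega, pow_add]
          ring
  refine ⟨hsq, ?_⟩
  have hN0 : (0 : ℝ) ≤ ((n + d : ℕ) : ℝ) := Nat.cast_nonneg _
  have hroot : (((n + d : ℕ) : ℝ) ^ (((n : ℝ) - (d : ℝ)) / 2)) ^ 2
      = ((n + d : ℕ) : ℝ) ^ (n - d) := by
    rw [← Real.rpow_mul_natCast hN0, ← Real.rpow_natCast _ (n - d), Nat.cast_sub hnd]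
    congr 1
    push_cast
    ring
  rw [← sq_eq_sq₀ (abs_nonneg _) (mul_nonneg (Real.rpow_nonneg hN0 _) (abs_nonneg _)),
    mul_pow, sq_abs, sq_abs, hroot, hsq]
end

section
/- Let $N = n + d$ and let $H$ be an $N \times N$ Hadamard matrix partitioned in block form $H = \begin{bmatrix} D & E \\ V & C \end{bmatrix}$, where $D$ is $n \times n$ and $C$ is $d \times d$. Then $D$ is invertible if and only if $C$ is invertible. -/
/-!
Put `N = n + d`. Since `H * Hᵀ = N • 1`, the first block column `[Dᵀ; Eᵀ]` of `Hᵀ` is sent by `H` to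
`[N • 1; 0]`. Completing it with `[0; 1]` gives
`H * [[Dᵀ, 0], [Eᵀ, 1]] = [[N • 1, E], [0, C]]`, hence `det H * det D = N ^ n * det C`.
Both `det H` and `N ^ n` are nonzero, so `det D` and `det C` vanish together.
-/

open Matrix

/-- For a Hadamard matrix `H = [[D, E], [V, C]]` of order `N = n + d`,
`D` is invertible iff `C` is invertible. -/
theorem stmt_6 (n d : ℕ)
    (D : Matrix (Fin n) (Fin n) ℝ) (E : Matrix (Fin n) (Fin d) ℝ)
    (V : Matrix (Fin d) (Fin n) ℝ) (C : Matrix (Fin d) (Fin d) ℝ)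
    (H : Matrix (Fin n ⊕ Fin d) (Fin n ⊕ Fin d) ℝ)
    (hblocks : H = Matrix.fromBlocks D E V C)
    (hentries : ∀ i j, H i j = 1 ∨ H i j = -1)
    (hHHT : H * Hᵀ = ((n + d : ℕ) : ℝ) • (1 : Matrix (Fin n ⊕ Fin d) (Fin n ⊕ Fin d) ℝ))
    (hHTH : Hᵀ * H = ((n + d : ℕ) : ℝ) • (1 : Matrix (Fin n ⊕ Fin d) (Fin n ⊕ Fin d) ℝ)) :
    IsUnit D ↔ IsUnit C := by
  subst hblocks
  have hpow (k : ℕ) (hk : k ≤ n + d) : ((n + d : ℕ) : ℝ) ^ k ≠ 0 := by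
    -- If `n + d = 0` then `k = 0`, and `0 ^ 0 = 1`.
    rcases Nat.eq_zero_or_pos (n + d) with h0 | h0
    · obtain rfl : k = 0 := by omega
      simp
    · exact pow_ne_zero _ (by exact_mod_cast h0.ne')
  have hdet : (fromBlocks D E V C).det ≠ 0 := by
    intro h
    have h2 := congrArg det hHHT
    rw [det_mul, h, zero_mul, det_smul, det_one, mul_one, Fintype.card_sum, Fintype.card_fin,
      Fintype.card_fin] at h2
    exact hpow _ le_rfl h2.symm
  rw [fromBlocks_transpose, fromBlocks_multiply, ← fromBlocks_one, fromBlocks_smul,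
    fromBlocks_inj] at hHHT
  obtain ⟨h11, -, h21, -⟩ := hHHT
  have key : fromBlocks D E V C * fromBlocks Dᵀ 0 Eᵀ 1 =
      fromBlocks (((n + d : ℕ) : ℝ) • (1 : Matrix (Fin n) (Fin n) ℝ)) E 0 C := by
    rw [fromBlocks_multiply, h11, h21]
    simp
  have hk := congrArg det key
  rw [det_mul, det_fromBlocks_zero₁₂, det_fromBlocks_zero₂₁, det_smul, det_one, det_one, mul_one,
    mul_one, det_transpose, Fintype.card_fin] at hk
  rw [isUnit_iff_isUnit_det, isUnit_iff_isUnit_det, isUnit_iff_ne_zero, isUnit_iff_ne_zero]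
  have hn := hpow n (Nat.le_add_right n d)
  constructor
  · intro hD hC
    rw [hC, mul_zero] at hk
    exact mul_ne_zero hdet hD hk
  · intro hC hD
    rw [hD, mul_zero] at hk
    exact mul_ne_zero hn hC hk.symm
end

section
/- Let $N = n + d$ and let $H$ be an $N \times N$ Hadamard matrix partitioned in block form $H = \begin{bmatrix} D & E \\ V & C \end{bmatrix}$, where $D$ is $n \times n$ and $C$ is $d \times d$. If $D$ is invertible, then $C$ is invertible and $D^{-1} = \frac{1}{N}\,(D - E\,C^{-1}\,V)^T$. -/
/-!
Reading `H * Hᵀ = N` and `Hᵀ * H = N` blockwise gives `V Dᵀ + C Eᵀ = 0`, `V Vᵀ + C Cᵀ = N`,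
`Dᵀ D + Vᵀ V = N` and `Eᵀ D + Cᵀ V = 0`. With `D` invertible the first two yield
`C (Cᵀ - Eᵀ D⁻ᵀ Vᵀ) = C Cᵀ + V Vᵀ = N`, so `C` is invertible; the last two then yield
`(D - E C⁻¹ V)ᵀ D = Dᵀ D - Vᵀ C⁻ᵀ (Eᵀ D) = Dᵀ D + Vᵀ V = N`.
-/

open Matrix

/-- For a Hadamard matrix `H = [[D, E], [V, C]]` of order `N = n + d`, if `D` is
invertible then `C` is invertible and `D⁻¹ = (1/N) (D - E C⁻¹ V)ᵀ`. -/
theorem stmt_7 (n d : ℕ)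
    (D : Matrix (Fin n) (Fin n) ℝ) (E : Matrix (Fin n) (Fin d) ℝ)
    (V : Matrix (Fin d) (Fin n) ℝ) (C : Matrix (Fin d) (Fin d) ℝ)
    (H : Matrix (Fin n ⊕ Fin d) (Fin n ⊕ Fin d) ℝ)
    (hblocks : H = Matrix.fromBlocks D E V C)
    (hentries : ∀ i j, H i j = 1 ∨ H i j = -1)
    (hHHT : H * Hᵀ = ((n + d : ℕ) : ℝ) • (1 : Matrix (Fin n ⊕ Fin d) (Fin n ⊕ Fin d) ℝ))
    (hHTH : Hᵀ * H = ((n + d : ℕ) : ℝ) • (1 : Matrix (Fin n ⊕ Fin d) (Fin n ⊕ Fin d) ℝ))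
    (hD : IsUnit D) :
    IsUnit C ∧ D⁻¹ = (((n + d : ℕ) : ℝ))⁻¹ • (D - E * C⁻¹ * V)ᵀ := by
  rcases Nat.eq_zero_or_pos (n + d) with h0 | hpos
  -- For `N = 0` every matrix is empty, and the scalar `N⁻¹ = 0` plays no role.
  · obtain ⟨rfl, rfl⟩ : n = 0 ∧ d = 0 := by omega
    exact ⟨isUnit_of_subsingleton C, Subsingleton.elim _ _⟩
  have hN : (((n + d : ℕ) : ℝ)) ≠ 0 := by exact_mod_cast hpos.ne'
  generalize ((n + d : ℕ) : ℝ) = N at *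
  subst hblocks
  rw [fromBlocks_transpose, fromBlocks_multiply, ← fromBlocks_one, fromBlocks_smul,
    fromBlocks_inj] at hHHT hHTH
  obtain ⟨-, -, hVD, hVV⟩ := hHHT
  obtain ⟨hDD, -, hED, -⟩ := hHTH
  rw [smul_zero] at hVD hED
  have hDdet : IsUnit Dᵀ.det := by rwa [det_transpose, ← isUnit_iff_isUnit_det]
  have hCX : C * (N⁻¹ • (Cᵀ - Eᵀ * (Dᵀ)⁻¹ * Vᵀ)) = 1 := by
    have h : C * Eᵀ = -(V * Dᵀ) := eq_neg_of_add_eq_zero_right hVD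
    rw [Matrix.mul_smul, Matrix.mul_sub, ← Matrix.mul_assoc, ← Matrix.mul_assoc, h,
      Matrix.neg_mul, mul_nonsing_inv_cancel_right _ _ hDdet, Matrix.neg_mul, sub_neg_eq_add,
      add_comm, hVV, smul_smul, inv_mul_cancel₀ hN, one_smul]
  have hC : IsUnit C := IsUnit.of_mul_eq_one _ hCX
  have hCdet : IsUnit Cᵀ.det := by rwa [det_transpose, ← isUnit_iff_isUnit_det]
  refine ⟨hC, inv_eq_left_inv ?_⟩
  have h : Eᵀ * D = -(Cᵀ * V) := eq_neg_of_add_eq_zero_left hED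
  rw [Matrix.smul_mul, transpose_sub, transpose_mul, transpose_mul, transpose_nonsing_inv,
    Matrix.sub_mul, Matrix.mul_assoc, Matrix.mul_assoc, h, Matrix.mul_neg,
    nonsing_inv_mul_cancel_left _ _ hCdet, Matrix.mul_neg, sub_neg_eq_add, hDD, smul_smul,
    inv_mul_cancel₀ hN, one_smul]
end

section
/- Let $N = n + d$ and let $H$ be an $N \times N$ Hadamard matrix partitioned in block form $H = \begin{bmatrix} D & E \\ V & C \end{bmatrix}$, where $D$ is $n \times n$ and $C$ is $d \times d$. If $D$ is invertible, then the $d \times d$ matrix $C - V D^{-1} E$ is invertible and $(C - V D^{-1} E)^{-1} = \frac{1}{N}\,C^T$. -/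
/-!
Only the right-hand block column of `H Hᵀ = N I` is needed. It says `D Vᵀ + E Cᵀ = 0` and
`V Vᵀ + C Cᵀ = N I`. The first equation gives `D⁻¹ E Cᵀ = -Vᵀ`, hence
`(C - V D⁻¹ E) Cᵀ = C Cᵀ + V Vᵀ = N I`, and a one-sided inverse of a square matrix is two-sided.
-/

open Matrix

/-- For a Hadamard matrix `H = [[D, E], [V, C]]` of order `N = n + d`, if `D` is
invertible then `C - V D⁻¹ E` is invertible and `(C - V D⁻¹ E)⁻¹ = (1/N) Cᵀ`. -/
theorem stmt_8 (n d : ℕ)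
    (D : Matrix (Fin n) (Fin n) ℝ) (E : Matrix (Fin n) (Fin d) ℝ)
    (V : Matrix (Fin d) (Fin n) ℝ) (C : Matrix (Fin d) (Fin d) ℝ)
    (H : Matrix (Fin n ⊕ Fin d) (Fin n ⊕ Fin d) ℝ)
    (hblocks : H = Matrix.fromBlocks D E V C)
    (hentries : ∀ i j, H i j = 1 ∨ H i j = -1)
    (hHHT : H * Hᵀ = ((n + d : ℕ) : ℝ) • (1 : Matrix (Fin n ⊕ Fin d) (Fin n ⊕ Fin d) ℝ))
    (hHTH : Hᵀ * H = ((n + d : ℕ) : ℝ) • (1 : Matrix (Fin n ⊕ Fin d) (Fin n ⊕ Fin d) ℝ))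
    (hD : IsUnit D) :
    IsUnit (C - V * D⁻¹ * E) ∧
      (C - V * D⁻¹ * E)⁻¹ = (((n + d : ℕ) : ℝ))⁻¹ • Cᵀ := by
  subst hblocks
  rw [fromBlocks_transpose, fromBlocks_multiply, ← fromBlocks_one, fromBlocks_smul,
    fromBlocks_inj] at hHHT
  obtain ⟨-, h12, -, h22⟩ := hHHT
  rw [smul_zero] at h12
  have hDE : D⁻¹ * (E * Cᵀ) = -Vᵀ := by
    rw [eq_neg_of_add_eq_zero_right h12, Matrix.mul_neg, ← Matrix.mul_assoc,
      Matrix.nonsing_inv_mul D ((Matrix.isUnit_iff_isUnit_det D).mp hD), Matrix.one_mul]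
  have hmul : (C - V * D⁻¹ * E) * Cᵀ = ((n + d : ℕ) : ℝ) • (1 : Matrix (Fin d) (Fin d) ℝ) := by
    rw [Matrix.sub_mul, Matrix.mul_assoc, Matrix.mul_assoc, hDE, Matrix.mul_neg, sub_neg_eq_add,
      add_comm, h22]
  have hinv : (C - V * D⁻¹ * E) * ((((n + d : ℕ) : ℝ))⁻¹ • Cᵀ) = 1 := by
    rcases Nat.eq_zero_or_pos d with rfl | hd
    -- For `d = 0` the order `N` may vanish, but then all the matrices are empty.
    · exact Subsingleton.elim _ _
    · have hN : ((n + d : ℕ) : ℝ) ≠ 0 := Nat.cast_ne_zero.mpr (by omega)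
      rw [Matrix.mul_smul, hmul, smul_smul, inv_mul_cancel₀ hN, one_smul]
  exact ⟨IsUnit.of_mul_eq_one _ hinv, Matrix.inv_eq_right_inv hinv⟩
end

section
/- Let $N = n + d$ and let $H$ be an $N \times N$ Hadamard matrix partitioned in block form $H = \begin{bmatrix} D & E \\ V & C \end{bmatrix}$, where $D$ is $n \times n$ and $C$ is $d \times d$, and suppose $D$ is invertible (hence $C$ is invertible). Then $\det(D - E\,C^{-1}\,V) \cdot \det(D) = N^n$. -/
/-!
Writing `S = D - E C⁻¹ V`, the block equations `D Dᵀ + E Eᵀ = N` and `V Dᵀ + C Eᵀ = 0` contained in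
`H Hᵀ = N` give `S Dᵀ = D Dᵀ - E C⁻¹ (V Dᵀ) = D Dᵀ + E Eᵀ = N`, and the claim follows by taking
determinants. This needs `C` to be invertible: substituting `V = -C Eᵀ (Dᵀ)⁻¹` into the last block
equation `V Vᵀ + C Cᵀ = N` gives `C (Cᵀ - Eᵀ (Dᵀ)⁻¹ Vᵀ) = N`.
-/

open Matrix

/-- For a Hadamard matrix `H = [[D, E], [V, C]]` of order `N = n + d` with `D`
invertible, `det(D - E C⁻¹ V) ⬝ det D = Nⁿ`. -/
theorem stmt_9 (n d : ℕ)
    (D : Matrix (Fin n) (Fin n) ℝ) (E : Matrix (Fin n) (Fin d) ℝ)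
    (V : Matrix (Fin d) (Fin n) ℝ) (C : Matrix (Fin d) (Fin d) ℝ)
    (H : Matrix (Fin n ⊕ Fin d) (Fin n ⊕ Fin d) ℝ)
    (hblocks : H = Matrix.fromBlocks D E V C)
    (hentries : ∀ i j, H i j = 1 ∨ H i j = -1)
    (hHHT : H * Hᵀ = ((n + d : ℕ) : ℝ) • (1 : Matrix (Fin n ⊕ Fin d) (Fin n ⊕ Fin d) ℝ))
    (hHTH : Hᵀ * H = ((n + d : ℕ) : ℝ) • (1 : Matrix (Fin n ⊕ Fin d) (Fin n ⊕ Fin d) ℝ))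
    (hD : IsUnit D) :
    (D - E * C⁻¹ * V).det * D.det = ((n + d : ℕ) : ℝ) ^ n := by
  have hDT : IsUnit Dᵀ.det := by
    rw [det_transpose]
    exact (isUnit_iff_isUnit_det D).mp hD
  rw [hblocks, fromBlocks_transpose, fromBlocks_multiply, ← fromBlocks_one, fromBlocks_smul,
    fromBlocks_inj] at hHHT
  obtain ⟨h11, -, h21, h22⟩ := hHHT
  rw [smul_zero] at h21
  have hVD : V * Dᵀ = -(C * Eᵀ) := eq_neg_of_add_eq_zero_left h21
  have hC : IsUnit C.det := by
    -- Division by `n + d` is impossible when `n + d = 0`, but then `C` is an empty matrix.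
    rcases Nat.eq_zero_or_pos d with rfl | hd
    · simp
    · have hN : ((n + d : ℕ) : ℝ) ≠ 0 := by
        exact_mod_cast (by omega : n + d ≠ 0)
      have hV : V = -(C * Eᵀ) * Dᵀ⁻¹ := by
        rw [← hVD, mul_nonsing_inv_cancel_right _ _ hDT]
      have hCN : C * (Cᵀ - Eᵀ * Dᵀ⁻¹ * Vᵀ) = ((n + d : ℕ) : ℝ) • 1 := by
        calc C * (Cᵀ - Eᵀ * Dᵀ⁻¹ * Vᵀ) = -(C * Eᵀ) * Dᵀ⁻¹ * Vᵀ + C * Cᵀ := by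
              simp only [Matrix.mul_sub, Matrix.neg_mul, Matrix.mul_assoc]
              abel
          _ = ((n + d : ℕ) : ℝ) • 1 := by rw [← hV, h22]
      refine isUnit_det_of_right_inverse (B := ((n + d : ℕ) : ℝ)⁻¹ • (Cᵀ - Eᵀ * Dᵀ⁻¹ * Vᵀ)) ?_
      rw [Matrix.mul_smul, hCN, smul_smul, inv_mul_cancel₀ hN, one_smul]
  have hS : (D - E * C⁻¹ * V) * Dᵀ = ((n + d : ℕ) : ℝ) • 1 := by
    rw [Matrix.sub_mul, Matrix.mul_assoc, hVD, Matrix.mul_neg, sub_neg_eq_add, Matrix.mul_assoc,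
      nonsing_inv_mul_cancel_left _ _ hC, h11]
  rw [← det_transpose D, ← det_mul, hS, det_smul, det_one, mul_one, Fintype.card_fin]
end

section
/- Let $D$ be an invertible $n \times n$ real matrix all of whose entries lie in $\{-1, 1\}$. Then, setting $N = 2^n$, there exist $\{-1,1\}$-matrices $E$ (of size $n \times (N - n)$), $V$ (of size $(N-n) \times n$), and $C$ (of size $(N-n) \times (N-n)$) such that $H = \begin{bmatrix} D & E \\ V & C \end{bmatrix}$ is a Hadamard matrix of order $N$; consequently $C$ is invertible and $D^{-1} = \frac{1}{N}\,(D - E\,C^{-1}\,V)^T$. -/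
/-!
The `2ⁿ × 2ⁿ` matrix whose rows are the sign vectors `x`, whose columns are the subsets `S` of the
coordinates, and whose entries are `∏ i ∈ S, x i`, is Hadamard: the inner product of rows `x` and
`y` is `∑ S, ∏ i ∈ S, x i * y i = ∏ i, (1 + x i * y i)`, which vanishes as soon as `x` and `y`
differ in a coordinate (`signMatrix_mul_transpose`). The singleton columns list the coordinates of
`x`, so `D`, whose rows are distinct because it is invertible, is the submatrix on its own rows and
the singleton columns. Reindexing (`exists_equiv_extending`) moves it to the upper left corner.
The invertibility of `C` and the formula for `D⁻¹` then follow from the block form of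
`HᵀH = N • 1` alone (`isUnit_and_inv_of_fromBlocks`).
-/

open Matrix

/-- The rows are all sign vectors `x`, and the column of `S` is the Schur product of the coordinate
columns in `S`, so that `S = ∅` is the all-ones column. -/
def signMatrix (n : ℕ) : Matrix (Fin n → ℤˣ) (Finset (Fin n)) ℝ :=
  fun x S => ∏ i ∈ S, ((x i : ℤ) : ℝ)

lemma signMatrix_entry (n : ℕ) (x : Fin n → ℤˣ) (S : Finset (Fin n)) :
    signMatrix n x S = 1 ∨ signMatrix n x S = -1 := by
  have h : signMatrix n x S = (((∏ i ∈ S, x i : ℤˣ) : ℤ) : ℝ) := by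
    simp [signMatrix, Units.coe_prod]
  rw [h]
  rcases Int.units_eq_one_or (∏ i ∈ S, x i) with h | h <;> simp [h]

lemma signMatrix_mul_transpose (n : ℕ) :
    signMatrix n * (signMatrix n)ᵀ = ((2 ^ n : ℕ) : ℝ) • 1 := by
  ext x y
  have h : (signMatrix n * (signMatrix n)ᵀ) x y
      = ∏ i, (1 + ((x i : ℤ) : ℝ) * ((y i : ℤ) : ℝ)) := by
    rw [Finset.prod_one_add]
    simp [Matrix.mul_apply, signMatrix, Finset.prod_mul_distrib]
  rw [h]
  by_cases hxy : x = y
  · subst hxy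
    have h2 : ∀ i, (1 + ((x i : ℤ) : ℝ) * ((x i : ℤ) : ℝ)) = 2 := by
      intro i
      rcases Int.units_eq_one_or (x i) with h | h <;> simp [h] <;> norm_num
    simp [h2]
  · obtain ⟨i, hi⟩ := Function.ne_iff.mp hxy
    rw [Finset.prod_eq_zero (Finset.mem_univ i)]
    · simp [hxy]
    · rcases Int.units_eq_one_or (x i) with h | h <;>
        rcases Int.units_eq_one_or (y i) with h' | h' <;> simp_all

lemma exists_equiv_extending {α : Type*} [Fintype α] {n N : ℕ} (f : Fin n → α)
    (hf : Function.Injective f) (hN : Fintype.card α = N) :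
    ∃ e : Fin n ⊕ Fin (N - n) ≃ α, ∀ i, e (Sum.inl i) = f i := by
  classical
  have hc : Fintype.card (Fin (N - n)) = Fintype.card ((Set.range f)ᶜ : Set α) := by
    rw [Fintype.card_compl_set, Set.card_range_of_injective hf, hN]
    simp
  refine ⟨((Equiv.ofInjective f hf).sumCongr (Fintype.equivOfCardEq hc)).trans
    (Equiv.Set.sumCompl (Set.range f)), fun i => ?_⟩
  simp

/-- The right block column of `HᵀH = c • 1` gives a left inverse of `C` once `E` is expressed through
`D⁻¹`; the left block column then says that `c⁻¹` times the transposed Schur complement of `C` is a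
left inverse of `D`. -/
lemma isUnit_and_inv_of_fromBlocks {m k : Type*} [Fintype m] [DecidableEq m] [Fintype k]
    [DecidableEq k] {c : ℝ} (hc : c ≠ 0) (D : Matrix m m ℝ) (E : Matrix m k ℝ)
    (V : Matrix k m ℝ) (C : Matrix k k ℝ) (hD : IsUnit D)
    (h : (fromBlocks D E V C)ᵀ * fromBlocks D E V C = c • 1) :
    IsUnit C ∧ D⁻¹ = c⁻¹ • (D - E * C⁻¹ * V)ᵀ := by
  rw [fromBlocks_transpose, fromBlocks_multiply, ← fromBlocks_one, fromBlocks_smul,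
    fromBlocks_inj] at h
  obtain ⟨h11, h12, h21, h22⟩ := h
  simp only [smul_zero] at h12 h21
  have hDt : IsUnit Dᵀ.det := by rw [det_transpose]; exact (isUnit_iff_isUnit_det D).mp hD
  have hE : E = -((Dᵀ)⁻¹ * (Vᵀ * C)) := by
    rw [← nonsing_inv_mul_cancel_left Dᵀ E hDt, eq_neg_of_add_eq_zero_left h12, Matrix.mul_neg]
  -- substituting `E` in the lower right block exhibits a left inverse of `C`
  have hleft : (c⁻¹ • (Cᵀ - Eᵀ * (Dᵀ)⁻¹ * Vᵀ)) * C = 1 := by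
    have h3 : Eᵀ * E = -(Eᵀ * (Dᵀ)⁻¹ * Vᵀ * C) := by
      have h3' := congrArg (Eᵀ * ·) hE
      simpa only [Matrix.mul_neg, Matrix.mul_assoc] using h3'
    rw [Matrix.smul_mul, Matrix.sub_mul, sub_eq_neg_add, ← h3, h22, smul_smul,
      inv_mul_cancel₀ hc, one_smul]
  have hC : IsUnit C := IsUnit.of_mul_eq_one_right _ hleft
  refine ⟨hC, inv_eq_left_inv ?_⟩
  have hCt : IsUnit Cᵀ.det := by rw [det_transpose]; exact (isUnit_iff_isUnit_det C).mp hC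
  have h4 : (Cᵀ)⁻¹ * (Eᵀ * D) = -V := by
    rw [eq_neg_of_add_eq_zero_left h21, Matrix.mul_neg, nonsing_inv_mul_cancel_left _ _ hCt]
  rw [Matrix.smul_mul, transpose_sub, transpose_mul, transpose_mul, transpose_nonsing_inv,
    Matrix.sub_mul, Matrix.mul_assoc, Matrix.mul_assoc, h4, Matrix.mul_neg, sub_neg_eq_add, h11,
    smul_smul, inv_mul_cancel₀ hc, one_smul]

/-- Every invertible `n × n` `{-1,1}`-matrix `D` can be completed to a Hadamard
matrix `H = [[D, E], [V, C]]` of order `N = 2ⁿ`; consequently `C` is invertible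
and `D⁻¹ = (1/N) (D - E C⁻¹ V)ᵀ`. -/
theorem stmt_11 (n : ℕ) (D : Matrix (Fin n) (Fin n) ℝ)
    (hDent : ∀ i j, D i j = 1 ∨ D i j = -1) (hD : IsUnit D) :
    ∃ (E : Matrix (Fin n) (Fin (2 ^ n - n)) ℝ)
      (V : Matrix (Fin (2 ^ n - n)) (Fin n) ℝ)
      (C : Matrix (Fin (2 ^ n - n)) (Fin (2 ^ n - n)) ℝ),
      (∀ i j, (Matrix.fromBlocks D E V C) i j = 1 ∨ (Matrix.fromBlocks D E V C) i j = -1) ∧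
      (Matrix.fromBlocks D E V C) * (Matrix.fromBlocks D E V C)ᵀ =
        ((2 ^ n : ℕ) : ℝ) • (1 : Matrix (Fin n ⊕ Fin (2 ^ n - n)) (Fin n ⊕ Fin (2 ^ n - n)) ℝ) ∧
      (Matrix.fromBlocks D E V C)ᵀ * (Matrix.fromBlocks D E V C) =
        ((2 ^ n : ℕ) : ℝ) • (1 : Matrix (Fin n ⊕ Fin (2 ^ n - n)) (Fin n ⊕ Fin (2 ^ n - n)) ℝ) ∧
      IsUnit C ∧
      D⁻¹ = (((2 ^ n : ℕ) : ℝ))⁻¹ • (D - E * C⁻¹ * V)ᵀ := by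
  have hc : ((2 ^ n : ℕ) : ℝ) ≠ 0 := by positivity
  have hex : ∀ i j, ∃ u : ℤˣ, ((u : ℤ) : ℝ) = D i j := by
    intro i j
    rcases hDent i j with h | h
    · exact ⟨1, by simp [h]⟩
    · exact ⟨-1, by simp [h]⟩
  choose r hr using hex
  have hrinj : Function.Injective r := by
    intro a b hab
    refine (linearIndependent_rows_iff_isUnit.mpr hD).injective ?_
    funext j
    change D a j = D b j
    rw [← hr, ← hr, hab]
  obtain ⟨e, he⟩ := exists_equiv_extending (N := 2 ^ n) r hrinj (by simp)
  obtain ⟨f, hf⟩ := exists_equiv_extending (N := 2 ^ n) (fun j : Fin n => ({j} : Finset (Fin n)))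
    Finset.singleton_injective (by simp)
  set H : Matrix (Fin n ⊕ Fin (2 ^ n - n)) (Fin n ⊕ Fin (2 ^ n - n)) ℝ :=
    (signMatrix n).submatrix e f with hH
  have hH11 : H.toBlocks₁₁ = D := by
    ext i j
    simp [toBlocks₁₁, hH, he, hf, signMatrix, hr]
  have hblocks : fromBlocks D H.toBlocks₁₂ H.toBlocks₂₁ H.toBlocks₂₂ = H := by
    rw [← hH11, fromBlocks_toBlocks]
  have hrow : H * Hᵀ = ((2 ^ n : ℕ) : ℝ) • 1 := by
    rw [hH, transpose_submatrix, submatrix_mul_equiv, signMatrix_mul_transpose]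
    ext i j
    simp [Matrix.one_apply]
  -- for a square matrix the rescaled transpose is a two-sided inverse
  have hcol : Hᵀ * H = ((2 ^ n : ℕ) : ℝ) • 1 := by
    have h1 : H * (((2 ^ n : ℕ) : ℝ)⁻¹ • Hᵀ) = 1 := by
      rw [Matrix.mul_smul, hrow, smul_smul, inv_mul_cancel₀ hc, one_smul]
    have h2 := mul_eq_one_comm.mp h1
    rw [← h2, Matrix.smul_mul, smul_smul, mul_inv_cancel₀ hc, one_smul]
  refine ⟨H.toBlocks₁₂, H.toBlocks₂₁, H.toBlocks₂₂, ?_, ?_, ?_, ?_⟩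
  · rw [hblocks]
    exact fun i j => signMatrix_entry n _ _
  · rw [hblocks, hrow]
  · rw [hblocks, hcol]
  · exact isUnit_and_inv_of_fromBlocks hc D _ _ _ hD (by rw [hblocks, hcol])
end

section
/- Let $N = n + d$ and let $H$ be an $N \times N$ Hadamard matrix partitioned in block form $H = \begin{bmatrix} D & E \\ V & C \end{bmatrix}$, where $D$ is $n \times n$ and $C$ is $d \times d$. Assume the first column of $H$ is the all-ones vector $1_N$ (so the first column of $D$ is $1_n$ and the first column of $V$ is $1_d$) and that $D$ is invertible (hence $C$ is invertible). Then $(D - E\,C^{-1}\,V)^T\, 1_n = \begin{bmatrix} N \\ 0_{n-1} \end{bmatrix}$, i.e., the first column of $D - E C^{-1} V$ sums to $N$ and every other column of $D - E C^{-1} V$ sums to $0$. -/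
/-!
Write `N = n + d`. Reading `H * Hᵀ = N • 1` and `Hᵀ * H = N • 1` blockwise gives
`V Dᵀ + C Eᵀ = 0`, `V Vᵀ + C Cᵀ = N • 1`, `Dᵀ D + Vᵀ V = N • 1` and `Dᵀ E + Vᵀ C = 0`.
The first two make `N⁻¹ • (Cᵀ - Eᵀ (Dᵀ)⁻¹ Vᵀ)` a right inverse of `C`, and the last two make the
Schur complement `S = D - E C⁻¹ V` satisfy `Dᵀ S = N • 1`, hence `Sᵀ D = N • 1`.
Since the first column of `D` is the all-ones vector, `Sᵀ 1ₙ` is the first column of `Sᵀ D`.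
-/

open Matrix

/-- For a Hadamard matrix `H = [[D, E], [V, C]]` of order `N = n + d` whose
first column is the all-ones vector (so the first column of `D` is `1ₙ` and the
first column of `V` is `1_d`), with `D` invertible,
`(D - E C⁻¹ V)ᵀ 1ₙ = (N, 0, …, 0)ᵀ`. -/
theorem stmt_13 (n d : ℕ) (hn : 0 < n)
    (D : Matrix (Fin n) (Fin n) ℝ) (E : Matrix (Fin n) (Fin d) ℝ)
    (V : Matrix (Fin d) (Fin n) ℝ) (C : Matrix (Fin d) (Fin d) ℝ)
    (H : Matrix (Fin n ⊕ Fin d) (Fin n ⊕ Fin d) ℝ)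
    (hblocks : H = Matrix.fromBlocks D E V C)
    (hentries : ∀ i j, H i j = 1 ∨ H i j = -1)
    (hHHT : H * Hᵀ = ((n + d : ℕ) : ℝ) • (1 : Matrix (Fin n ⊕ Fin d) (Fin n ⊕ Fin d) ℝ))
    (hHTH : Hᵀ * H = ((n + d : ℕ) : ℝ) • (1 : Matrix (Fin n ⊕ Fin d) (Fin n ⊕ Fin d) ℝ))
    (hcolD : ∀ i, D i ⟨0, hn⟩ = 1)
    (hcolV : ∀ i, V i ⟨0, hn⟩ = 1)
    (hD : IsUnit D) :
    (D - E * C⁻¹ * V)ᵀ.mulVec (fun _ => (1 : ℝ)) =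
      fun j => if j = (⟨0, hn⟩ : Fin n) then ((n + d : ℕ) : ℝ) else 0 := by
  have hN : ((n + d : ℕ) : ℝ) ≠ 0 := by
    exact_mod_cast (by omega : n + d ≠ 0)
  subst hblocks
  rw [fromBlocks_transpose, fromBlocks_multiply, ← fromBlocks_one, fromBlocks_smul,
    fromBlocks_inj] at hHHT hHTH
  obtain ⟨-, -, h21, h22⟩ := hHHT
  obtain ⟨k11, k12, -, -⟩ := hHTH
  rw [smul_zero] at h21 k12
  have hDt : IsUnit (Dᵀ).det := by
    rw [det_transpose]
    exact (isUnit_iff_isUnit_det D).1 hD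
  have hV : V = -(C * Eᵀ * (Dᵀ)⁻¹) := by
    rw [← Matrix.neg_mul, ← eq_neg_of_add_eq_zero_left h21, mul_nonsing_inv_cancel_right _ _ hDt]
  have hright : C * (((n + d : ℕ) : ℝ)⁻¹ • (Cᵀ - Eᵀ * (Dᵀ)⁻¹ * Vᵀ)) = 1 := by
    have hprod : C * (Cᵀ - Eᵀ * (Dᵀ)⁻¹ * Vᵀ) = V * Vᵀ + C * Cᵀ := by
      -- only the left factor `V` of `V * Vᵀ` is to be expressed through `C`
      have hVV : V * Vᵀ = -(C * Eᵀ * (Dᵀ)⁻¹) * Vᵀ := congrArg (· * Vᵀ) hV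
      rw [hVV]
      simp only [Matrix.mul_sub, Matrix.neg_mul, Matrix.mul_assoc]
      abel
    rw [Matrix.mul_smul, hprod, h22, smul_smul, inv_mul_cancel₀ hN, one_smul]
  have hC : IsUnit C.det := isUnit_det_of_right_inverse hright
  have hS : Dᵀ * (D - E * C⁻¹ * V) = ((n + d : ℕ) : ℝ) • (1 : Matrix (Fin n) (Fin n) ℝ) := by
    rw [Matrix.mul_sub, ← Matrix.mul_assoc, ← Matrix.mul_assoc, eq_neg_of_add_eq_zero_left k12,
      Matrix.neg_mul, mul_nonsing_inv_cancel_right _ _ hC, Matrix.neg_mul, sub_neg_eq_add, k11]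
  have hS' : (D - E * C⁻¹ * V)ᵀ * D = ((n + d : ℕ) : ℝ) • (1 : Matrix (Fin n) (Fin n) ℝ) := by
    simpa only [transpose_mul, transpose_transpose, transpose_smul, transpose_one]
      using congrArg transpose hS
  funext j
  have hj := congrFun (congrFun hS' j) ⟨0, hn⟩
  rw [Matrix.mul_apply, Matrix.smul_apply, Matrix.one_apply, smul_eq_mul, mul_ite, mul_one, mul_zero] at hj
  simp only [hcolD] at hj
  exact hj
end

section
/- For every $5 \times 5$ real matrix $M$ all of whose entries lie in $\{-1, 1\}$, the absolute value of the determinant of $M$ belongs to the set $\{0, 16, 32, 48\}$; in particular $|\det M| \leq 48$. -/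
/-!
The determinant of a `±1`-matrix of order `n` is an integer divisible by `2 ^ (n - 1)`: subtracting
the first row from the others leaves rows with entries in `{-2, 0, 2}`, and a factor `2` comes out
of each of these `n - 1` rows (`exists_det_eq_two_pow_mul`). On the other hand Hadamard's bound
gives `(det M) ^ 2 ≤ n ^ n` (`det_sq_le_card_pow_card`): the eigenvalues of the Gram matrix
`M * Mᴴ` are nonnegative with sum `n ^ 2` and product `(det M) ^ 2`, so the arithmetic-geometric
mean inequality applies. For `n = 5`, writing `det M = 16 k`, the bound `256 k ^ 2 ≤ 3125` forces
`|k| ≤ 3`.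
-/

open Matrix

/-- Divisibility by `2 ^ n` for order `n + 1`, by subtracting row `0` from every other row. -/
lemma exists_det_eq_two_pow_mul {n : ℕ} (M : Matrix (Fin (n + 1)) (Fin (n + 1)) ℝ)
    (hent : ∀ i j, M i j = 1 ∨ M i j = -1) : ∃ k : ℤ, M.det = 2 ^ n * (k : ℝ) := by
  -- The rows of `D` are row `0` of `M` and the halved differences `(M i - M 0) / 2`.
  let D : Matrix (Fin (n + 1)) (Fin (n + 1)) ℤ := of fun i j =>
    if i = 0 then (if M 0 j = 1 then 1 else -1)
    else if M i j = M 0 j then 0 else if M i j = 1 then 1 else -1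
  let v : Fin (n + 1) → ℝ := fun i => if i = 0 then 1 else 2
  have hM : M.det = (of fun i j => v i * D.map (Int.cast : ℤ → ℝ) i j).det := by
    refine det_eq_of_forall_row_eq_smul_add_const (fun i => if i = 0 then 0 else 1) 0 (by simp) ?_
    intro i j
    by_cases hi : i = 0
    · subst hi
      rcases hent 0 j with h | h <;> simp [D, v, h]
    · rcases hent 0 j with h | h <;> rcases hent i j with h' | h' <;>
        simp [D, v, h, h', hi] <;> norm_num
  refine ⟨D.det, ?_⟩
  rw [hM, det_mul_column, Int.cast_det]
  simp [v, Fin.prod_univ_succ]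

/-- Hadamard's bound for `±1`-matrices, by the arithmetic-geometric mean inequality for the
eigenvalues of the Gram matrix `M * Mᴴ`, whose diagonal entries are all `n`. -/
lemma det_sq_le_card_pow_card {n : ℕ} (hn : n ≠ 0) (M : Matrix (Fin n) (Fin n) ℝ)
    (hent : ∀ i j, M i j = 1 ∨ M i j = -1) : M.det ^ 2 ≤ (n : ℝ) ^ n := by
  have hG : (M * Mᴴ).PosSemidef := posSemidef_self_mul_conjTranspose M
  have hdet : ∏ i, hG.1.eigenvalues i = M.det ^ 2 := by
    have h := hG.1.det_eq_prod_eigenvalues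
    rw [det_mul, det_conjTranspose] at h
    simpa [sq] using h.symm
  have htrace : ∑ i, hG.1.eigenvalues i = (n : ℝ) * n := by
    have hsq : ∀ i j, M i j * M i j = 1 := fun i j => by
      rcases hent i j with h | h <;> simp [h]
    have h := hG.1.trace_eq_sum_eigenvalues
    simpa [trace, mul_apply, hsq] using h.symm
  have hn' : (0 : ℝ) < n := by positivity
  have amgm := Real.geom_mean_le_arith_mean Finset.univ (fun _ => 1) hG.1.eigenvalues
    (by simp) (by simpa using hn') (fun i _ => hG.eigenvalues_nonneg i)
  simp only [Real.rpow_one, one_mul, hdet, htrace, Finset.sum_const, Finset.card_univ,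
    Fintype.card_fin, nsmul_eq_mul, mul_one] at amgm
  rw [mul_div_cancel_right₀ _ hn'.ne'] at amgm
  calc M.det ^ 2 = ((M.det ^ 2) ^ ((n : ℝ)⁻¹)) ^ n :=
        (Real.rpow_inv_natCast_pow (sq_nonneg _) hn).symm
    _ ≤ (n : ℝ) ^ n := by gcongr

/-- For every `5 × 5` real matrix with entries in `{-1, 1}`, the absolute value
of the determinant lies in `{0, 16, 32, 48}`; in particular it is at most `48`. -/
theorem stmt_16 (M : Matrix (Fin 5) (Fin 5) ℝ)
    (hent : ∀ i j, M i j = 1 ∨ M i j = -1) :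
    |M.det| ∈ ({0, 16, 32, 48} : Set ℝ) ∧ |M.det| ≤ 48 := by
  obtain ⟨k, hk⟩ := exists_det_eq_two_pow_mul M hent
  have hle := det_sq_le_card_pow_card (by norm_num) M hent
  rw [hk] at hle ⊢
  have hk2 : k ^ 2 < 4 ^ 2 := by
    have : (k : ℝ) ^ 2 < 4 ^ 2 := by norm_num at hle ⊢; linarith
    exact_mod_cast this
  obtain ⟨h1, h2⟩ := abs_lt.mp (abs_lt_of_sq_lt_sq hk2 (by norm_num))
  interval_cases k <;> norm_num
end
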